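/- Let x ∈ CGA₊ satisfy x + x̃ ∈ ℝ, x·x̃ ∈ ℝ, and x·e₊₋ = e₊₋·x. Then x lies in the real span of {1, e₁₂, e₁₃, e₂₃} or x lies in the real span of {1, e₊₋}. -/

import Mathlib

open Polynomial

/-- The quadratic form of signature (4,1) on ℝ⁵ defining conformal geometric algebra. -/
noncomputable def Qcga : QuadraticForm ℝ (Fin 5 → ℝ) :=
  QuadraticMap.weightedSumSquares ℝ (fun i : Fin 5 => if (i : ℕ) = 4 then (-1 : ℝ) else 1)

/-- Conformal geometric algebra CGA = Cl(4,1). -/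
abbrev CGA := CliffordAlgebra Qcga

/-- The generators e₁, e₂, e₃, e₊, e₋ of CGA (indexed 0,…,4). -/
noncomputable def eCGA (i : Fin 5) : CGA := CliffordAlgebra.ι Qcga (Pi.single i 1)

theorem Qcga_apply (v : Fin 5 → ℝ) :
    Qcga v = ∑ i : Fin 5, (if (i : ℕ) = 4 then (-1 : ℝ) else 1) * (v i * v i) := by
  simp [Qcga, QuadraticMap.weightedSumSquares_apply]

open CliffordAlgebra in
theorem eCGA_mul_self (i : Fin 5) : eCGA i * eCGA i = if (i : ℕ) = 4 then -1 else 1 := by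
  rw [eCGA, ι_sq_scalar, Qcga_apply,
    Finset.sum_eq_single i (by intro b _ hb; simp [hb]) (by simp)]
  split_ifs <;> simp

open CliffordAlgebra in
theorem eCGA_mul_eCGA_of_ne {i j : Fin 5} (h : i ≠ j) :
    eCGA i * eCGA j = -(eCGA j * eCGA i) := by
  rw [eCGA, eCGA, ι_mul_ι_comm]
  have : QuadraticMap.polar Qcga (Pi.single i 1) (Pi.single j 1) = 0 := by
    simp only [QuadraticMap.polar, Qcga_apply, ← Finset.sum_sub_distrib]
    refine Finset.sum_eq_zero fun k _ => ?_
    by_cases hi : k = i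
    · subst hi; simp [h]
    · simp [hi]
  simp [this]

/-- Left multiplication by one element of an anticommuting family, moved past another. -/
theorem mul_mul_of_anticomm {R : Type*} [Ring R] {f g : R} (h : g * f = -(f * g))
    (x : R) :
    g * (f * x) = -(f * (g * x)) := by
  rw [← mul_assoc, h, neg_mul, mul_assoc]

theorem mul_mul_of_mul_self_eq_one {R : Type*} [Ring R] {f : R} (h : f * f = 1) (x : R) :
    f * (f * x) = x := by
  rw [← mul_assoc, h, one_mul]

section

variable {A : Type*} [Ring A] [Algebra ℝ A]

/-- The sum `S + f S` for a submodule `S` of an algebra and an element `f`. -/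
def leftAdjoin (f : A) (S : Submodule ℝ A) : Submodule ℝ A :=
  S ⊔ S.map (LinearMap.mulLeft ℝ f)

theorem mem_leftAdjoin {f : A} {S : Submodule ℝ A} {x : A} :
    x ∈ leftAdjoin f S ↔ ∃ u ∈ S, ∃ v ∈ S, u + f * v = x := by
  simp [leftAdjoin, Submodule.mem_sup]

theorem mul_mem_leftAdjoin_of_anticomm {f g : A} {S : Submodule ℝ A} (hgf : g * f = -(f * g))
    (hg : ∀ x ∈ S, g * x ∈ S) : ∀ x ∈ leftAdjoin f S, g * x ∈ leftAdjoin f S := by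
  intro x hx
  obtain ⟨u, hu, v, hv, rfl⟩ := mem_leftAdjoin.1 hx
  refine mem_leftAdjoin.2 ⟨g * u, hg u hu, -(g * v), S.neg_mem (hg v hv), ?_⟩
  rw [mul_add, ← mul_assoc, hgf]
  noncomm_ring

theorem mul_mem_leftAdjoin_self {f : A} {S : Submodule ℝ A} (hf : f * f = 1) :
    ∀ x ∈ leftAdjoin f S, f * x ∈ leftAdjoin f S := by
  intro x hx
  obtain ⟨u, hu, v, hv, rfl⟩ := mem_leftAdjoin.1 hx
  exact mem_leftAdjoin.2 ⟨v, hv, u, hu, by rw [mul_add, ← mul_assoc, hf, one_mul, add_comm]⟩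

/-- The span of the products of subfamilies of `f 0, f 1, f 2, f 3`. -/
def monomialSpan (f : Fin 4 → A) : Submodule ℝ A :=
  leftAdjoin (f 0) (leftAdjoin (f 1) (leftAdjoin (f 2) (leftAdjoin (f 3) (ℝ ∙ (1 : A)))))

theorem one_mem_monomialSpan (f : Fin 4 → A) : (1 : A) ∈ monomialSpan f := by
  have h (g : A) (S : Submodule ℝ A) (hS : (1 : A) ∈ S) : (1 : A) ∈ leftAdjoin g S :=
    Submodule.mem_sup_left hS
  exact h _ _ (h _ _ (h _ _ (h _ _ (Submodule.mem_span_singleton_self 1))))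

theorem mul_mem_monomialSpan {f : Fin 4 → A} (hsq : ∀ i, f i * f i = 1)
    (hanti : ∀ i j, i ≠ j → f i * f j = -(f j * f i)) (i : Fin 4) :
    ∀ x ∈ monomialSpan f, f i * x ∈ monomialSpan f := by
  have swap {j k : Fin 4} (h : j ≠ k) (S : Submodule ℝ A) :=
    mul_mem_leftAdjoin_of_anticomm (S := S) (hanti j k h)
  fin_cases i
  · exact mul_mem_leftAdjoin_self (hsq 0)
  · exact swap (by decide) _ (mul_mem_leftAdjoin_self (hsq 1))
  · exact swap (by decide) _ (swap (by decide) _ (mul_mem_leftAdjoin_self (hsq 2)))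
  · exact swap (by decide) _ (swap (by decide) _ (swap (by decide) _
      (mul_mem_leftAdjoin_self (hsq 3))))

/-- Elements of the monomial span that commute with `f 3`. -/
theorem exists_eq_of_mem_monomialSpan_of_commute {f : Fin 4 → A} (hsq : ∀ i, f i * f i = 1)
    (hanti : ∀ i j, i ≠ j → f i * f j = -(f j * f i)) {x : A} (hx : x ∈ monomialSpan f)
    (hcomm : x * f 3 = f 3 * x) :
    ∃ a b c d a' b' c' d' : ℝ,
      x = a • 1 + (b • (f 0 * f 1) + c • (f 0 * f 2) + d • (f 1 * f 2)) +
        (a' • 1 + (b' • (f 0 * f 1) + c' • (f 0 * f 2) + d' • (f 1 * f 2))) * f 3 := by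
  have hx2 : x = (1 / 2 : ℝ) • (x + f 3 * (x * f 3)) := by
    rw [hcomm, mul_mul_of_mul_self_eq_one (hsq 3)]
    module
  simp only [monomialSpan, mem_leftAdjoin, Submodule.mem_span_singleton] at hx
  obtain ⟨_, ⟨_, ⟨_, ⟨_, ⟨p0, rfl⟩, _, ⟨p1, rfl⟩, rfl⟩, _, ⟨_, ⟨p2, rfl⟩, _, ⟨p3, rfl⟩, rfl⟩, rfl⟩,
    _, ⟨_, ⟨_, ⟨p4, rfl⟩, _, ⟨p5, rfl⟩, rfl⟩, _, ⟨_, ⟨p6, rfl⟩, _, ⟨p7, rfl⟩, rfl⟩, rfl⟩, rfl⟩,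
    _, ⟨_, ⟨_, ⟨_, ⟨p8, rfl⟩, _, ⟨p9, rfl⟩, rfl⟩, _, ⟨_, ⟨p10, rfl⟩, _, ⟨p11, rfl⟩, rfl⟩, rfl⟩,
    _, ⟨_, ⟨_, ⟨p12, rfl⟩, _, ⟨p13, rfl⟩, rfl⟩, _, ⟨_, ⟨p14, rfl⟩, _, ⟨p15, rfl⟩, rfl⟩, rfl⟩, rfl⟩,
    rfl⟩ := hx
  refine ⟨p0, p12, p10, p6, p1, p13, p11, p7, hx2.trans ?_⟩
  have h30 := hanti 3 0 (by decide)
  have h31 := hanti 3 1 (by decide)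
  have h32 := hanti 3 2 (by decide)
  simp only [mul_add, add_mul, mul_assoc, smul_mul_assoc, mul_smul_comm, mul_neg, mul_one, one_mul,
    h30, h31, h32, hsq, mul_mul_of_anticomm h30, mul_mul_of_anticomm h31,
    mul_mul_of_anticomm h32]
  module

/-- A combination of `f 0 * f 1`, `f 0 * f 2`, `f 1 * f 2` has nonpositive square, so it can only
be a multiple of `f 3` if it vanishes. -/
theorem bivector_eq_zero_of_mul_eq_algebraMap [Nontrivial A] {f : Fin 4 → A}
    (hsq : ∀ i, f i * f i = 1) (hanti : ∀ i j, i ≠ j → f i * f j = -(f j * f i)) {b c d r : ℝ}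
    (h : (b • (f 0 * f 1) + c • (f 0 * f 2) + d • (f 1 * f 2)) * f 3 = algebraMap ℝ A r) :
    b = 0 ∧ c = 0 ∧ d = 0 := by
  have h10 := hanti 1 0 (by decide)
  have h20 := hanti 2 0 (by decide)
  have h21 := hanti 2 1 (by decide)
  set w := b • (f 0 * f 1) + c • (f 0 * f 2) + d • (f 1 * f 2) with hw
  have hwr : w = r • f 3 := by
    rw [← mul_one w, ← hsq 3, ← mul_assoc, h, Algebra.smul_def]
  have hww : w * w = algebraMap ℝ A (-(b ^ 2 + c ^ 2 + d ^ 2)) := by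
    rw [hw, Algebra.algebraMap_eq_smul_one]
    simp only [mul_add, add_mul, mul_assoc, smul_mul_assoc, mul_smul_comm, mul_neg, mul_one,
      h10, h21, hsq, mul_mul_of_anticomm h10, mul_mul_of_anticomm h20,
      mul_mul_of_anticomm h21, mul_mul_of_mul_self_eq_one (hsq _)]
    module
  have hrr : w * w = algebraMap ℝ A (r ^ 2) := by
    rw [hwr, Algebra.algebraMap_eq_smul_one, smul_mul_smul_comm, hsq, sq]
  have key := FaithfulSMul.algebraMap_injective ℝ A (hww.symm.trans hrr)
  refine ⟨?_, ?_, ?_⟩ <;> nlinarith [sq_nonneg b, sq_nonneg c, sq_nonneg d, sq_nonneg r]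

end

/-- The even elements `eᵢ e₋` for `i ≠ 4`, which generate the even subalgebra. -/
noncomputable def evenGen (i : Fin 4) : CGA := eCGA i.castSucc * eCGA 4

theorem eCGA_four_mul_self : eCGA 4 * eCGA 4 = -1 := by
  simp [eCGA_mul_self]

theorem eCGA_castSucc_mul_self (i : Fin 4) : eCGA i.castSucc * eCGA i.castSucc = 1 := by
  rw [eCGA_mul_self, if_neg]
  simp only [Fin.val_castSucc]
  lia

theorem eCGA_four_mul_castSucc (i : Fin 4) : eCGA 4 * eCGA i.castSucc = -evenGen i :=
  eCGA_mul_eCGA_of_ne (Fin.castSucc_lt_last i).ne'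

theorem evenGen_mul_evenGen (i j : Fin 4) :
    evenGen i * evenGen j = eCGA i.castSucc * eCGA j.castSucc := by
  calc evenGen i * evenGen j
      = eCGA i.castSucc * (eCGA 4 * eCGA j.castSucc) * eCGA 4 := by simp only [evenGen, mul_assoc]
    _ = -(eCGA i.castSucc * eCGA j.castSucc * (eCGA 4 * eCGA 4)) := by
      rw [eCGA_four_mul_castSucc, evenGen]; noncomm_ring
    _ = _ := by rw [eCGA_four_mul_self]; simp

theorem evenGen_mul_self (i : Fin 4) : evenGen i * evenGen i = 1 := by
  rw [evenGen_mul_evenGen, eCGA_castSucc_mul_self]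

theorem evenGen_anticomm (i j : Fin 4) (h : i ≠ j) :
    evenGen i * evenGen j = -(evenGen j * evenGen i) := by
  rw [evenGen_mul_evenGen, evenGen_mul_evenGen,
    eCGA_mul_eCGA_of_ne ((Fin.castSucc_injective 4).ne h)]

theorem reverse_evenGen (i : Fin 4) : CliffordAlgebra.reverse (evenGen i) = -evenGen i := by
  rw [← eCGA_four_mul_castSucc, evenGen, CliffordAlgebra.reverse.map_mul, eCGA, eCGA,
    CliffordAlgebra.reverse_ι, CliffordAlgebra.reverse_ι]

theorem ι_eq_sum_eCGA (m : Fin 5 → ℝ) :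
    CliffordAlgebra.ι Qcga m = ∑ i : Fin 4, m i.castSucc • eCGA i.castSucc + m 4 • eCGA 4 := by
  conv_lhs => rw [pi_eq_sum_univ' m]
  simp only [map_sum, map_add, map_smul, Fin.sum_univ_castSucc (n := 4)]
  rfl

theorem ι_mul_ι_eq (m₁ m₂ : Fin 5 → ℝ) :
    CliffordAlgebra.ι Qcga m₁ * CliffordAlgebra.ι Qcga m₂ =
      (∑ i : Fin 4, m₁ i.castSucc • evenGen i - m₁ 4 • 1) *
        (∑ i : Fin 4, m₂ i.castSucc • evenGen i + m₂ 4 • 1) := by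
  have h₁ : CliffordAlgebra.ι Qcga m₁ * eCGA 4 =
      ∑ i : Fin 4, m₁ i.castSucc • evenGen i - m₁ 4 • 1 := by
    simp only [ι_eq_sum_eCGA, add_mul, Finset.sum_mul, smul_mul_assoc, eCGA_four_mul_self, evenGen,
      smul_neg, sub_eq_add_neg]
  have h₂ : eCGA 4 * CliffordAlgebra.ι Qcga m₂ =
      -(∑ i : Fin 4, m₂ i.castSucc • evenGen i + m₂ 4 • 1) := by
    simp only [ι_eq_sum_eCGA, mul_add, Finset.mul_sum, mul_smul_comm, eCGA_four_mul_self,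
      eCGA_four_mul_castSucc, smul_neg, Finset.sum_neg_distrib, neg_add]
  rw [← h₁, ← neg_eq_iff_eq_neg.2 h₂, mul_neg, mul_assoc, ← mul_assoc (eCGA 4),
    eCGA_four_mul_self]
  simp

theorem mem_monomialSpan_of_mem_even {x : CGA} (hx : x ∈ CliffordAlgebra.even Qcga) :
    x ∈ monomialSpan evenGen := by
  have hmul := mul_mem_monomialSpan evenGen_mul_self evenGen_anticomm
  have hsum (m : Fin 4 → ℝ) (r : ℝ) {y : CGA} (hy : y ∈ monomialSpan evenGen) :
      (∑ i, m i • evenGen i + r • 1) * y ∈ monomialSpan evenGen := by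
    simp only [add_mul, Finset.sum_mul, smul_mul_assoc, one_mul]
    exact add_mem (sum_mem fun i _ => Submodule.smul_mem _ _ (hmul i y hy))
      (Submodule.smul_mem _ _ hy)
  induction x, hx using CliffordAlgebra.even_induction with
  | algebraMap r =>
    rw [Algebra.algebraMap_eq_smul_one]
    exact Submodule.smul_mem _ _ (one_mem_monomialSpan _)
  | add x y _ _ hx hy => exact add_mem hx hy
  | ι_mul_ι_mul m₁ m₂ x _ hx =>
    rw [ι_mul_ι_eq, mul_assoc, sub_eq_add_neg, ← neg_smul]
    exact hsum _ _ (hsum _ _ hx)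

/-- if `x ∈ CGA₊` satisfies `x + x̃ ∈ ℝ`, `x·x̃ ∈ ℝ` and `x` commutes
with `e₊₋`, then `x` lies in the real span of `{1, e₁₂, e₁₃, e₂₃}` or in the real span
of `{1, e₊₋}`. -/
theorem stmt9 (x : CGA) (hx : x ∈ CliffordAlgebra.even Qcga)
    (h1 : ∃ r : ℝ, x + CliffordAlgebra.reverse x = algebraMap ℝ CGA r)
    (h2 : ∃ r : ℝ, x * CliffordAlgebra.reverse x = algebraMap ℝ CGA r)
    (hcomm : x * (eCGA 3 * eCGA 4) = (eCGA 3 * eCGA 4) * x) :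
    x ∈ Submodule.span ℝ
        ({1, eCGA 0 * eCGA 1, eCGA 0 * eCGA 2, eCGA 1 * eCGA 2} : Set CGA) ∨
    x ∈ Submodule.span ℝ ({1, eCGA 3 * eCGA 4} : Set CGA) := by
  have he (i j : Fin 4) := evenGen_mul_evenGen i j
  have h34 : eCGA 3 * eCGA 4 = evenGen 3 := rfl
  have h01 : eCGA 0 * eCGA 1 = evenGen 0 * evenGen 1 := (he 0 1).symm
  have h02 : eCGA 0 * eCGA 2 = evenGen 0 * evenGen 2 := (he 0 2).symm
  have h12 : eCGA 1 * eCGA 2 = evenGen 1 * evenGen 2 := (he 1 2).symm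
  rw [h34] at hcomm
  rw [h01, h02, h12, h34]
  have hsq := evenGen_mul_self
  have hanti := evenGen_anticomm
  have h10 := hanti 1 0 (by decide)
  have h20 := hanti 2 0 (by decide)
  have h21 := hanti 2 1 (by decide)
  have h30 := hanti 3 0 (by decide)
  have h31 := hanti 3 1 (by decide)
  have h32 := hanti 3 2 (by decide)
  obtain ⟨a, b, c, d, a', b', c', d', rfl⟩ :=
    exists_eq_of_mem_monomialSpan_of_commute hsq hanti (mem_monomialSpan_of_mem_even hx) hcomm
  obtain ⟨r, hr⟩ := h1
  obtain ⟨s, hs⟩ := h2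
  obtain ⟨rfl, rfl, rfl⟩ : b' = 0 ∧ c' = 0 ∧ d' = 0 := by
    refine bivector_eq_zero_of_mul_eq_algebraMap hsq hanti (r := r / 2 - a) ?_
    rw [map_sub, div_eq_inv_mul, map_mul, ← hr, ← Algebra.smul_def,
      Algebra.algebraMap_eq_smul_one]
    simp only [map_add, map_smul, CliffordAlgebra.reverse.map_mul, CliffordAlgebra.reverse.map_one,
      reverse_evenGen, add_mul, mul_assoc, smul_mul_assoc, mul_neg, neg_mul, one_mul, h10, h20,
      h21, h30, h31, h32, mul_mul_of_anticomm h10, mul_mul_of_anticomm h20,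
      mul_mul_of_anticomm h21]
    module
  by_cases ha' : a' = 0
  · left
    subst ha'
    simp only [zero_smul, add_zero, zero_mul]
    refine add_mem (Submodule.smul_mem _ _ (Submodule.subset_span (by simp)))
      (add_mem (add_mem ?_ ?_) ?_) <;>
    exact Submodule.smul_mem _ _ (Submodule.subset_span (by simp))
  · right
    obtain ⟨rfl, rfl, rfl⟩ : b = 0 ∧ c = 0 ∧ d = 0 := by
      refine bivector_eq_zero_of_mul_eq_algebraMap hsq hanti
        (r := (2 * a')⁻¹ * (a ^ 2 + b ^ 2 + c ^ 2 + d ^ 2 - a' ^ 2 - s)) ?_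
      rw [map_mul, map_sub, ← hs, ← Algebra.smul_def, eq_inv_smul_iff₀ (by simpa using ha'),
        Algebra.algebraMap_eq_smul_one]
      simp only [map_add, map_smul, CliffordAlgebra.reverse.map_mul,
        CliffordAlgebra.reverse.map_one, reverse_evenGen, mul_add, add_mul, mul_assoc,
        smul_mul_assoc, mul_smul_comm, mul_neg, neg_mul, mul_one, one_mul, zero_smul, add_zero, hsq,
        h10, h20, h21, h31, h32, mul_mul_of_anticomm h10, mul_mul_of_anticomm h20,
        mul_mul_of_anticomm h21, mul_mul_of_anticomm h30, mul_mul_of_anticomm h31,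
        mul_mul_of_mul_self_eq_one (hsq _)]
      module
    simp only [zero_smul, add_zero, smul_mul_assoc, one_mul]
    exact add_mem (Submodule.smul_mem _ _ (Submodule.subset_span (by simp)))
      (Submodule.smul_mem _ _ (Submodule.subset_span (by simp)))
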